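/- arXiv:2012.08878 — 2 statements merged into one kernel-verified Lean document; each statement's English description precedes it below -/
import Mathlib

section
/- Let P be a set of strings over Σ. Suppose w₀ is a linear superstring of P of minimum length, c₀ is a circular superstring of f(P) of minimum length, and c is any circular superstring of f(P). Then there exists a linear superstring w of P such that 2 * w.length ≤ c.length and w.length * c₀.length ≤ c.length * w₀.length (i.e., the approximation ratio of w for the shortest linear superstring problem on P is at most the approximation ratio of c for the shortest circular superstring problem on f(P)). -/
/-- `lift w` embeds a string over `α` into the barred alphabet `α ⊕ α` using unbarred letters. -/
def lift {α : Type*} (w : List α) : List (α ⊕ α) := w.map Sum.inl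

/-- `bar w` embeds a string over `α` into the barred alphabet `α ⊕ α` using barred letters. -/
def bar {α : Type*} (w : List α) : List (α ⊕ α) := w.map Sum.inr

/-- `f(P) = {lift s | s ∈ P} ∪ {bar s | s ∈ P}`. -/
def barred {α : Type*} (P : Set (List α)) : Set (List (α ⊕ α)) := (lift '' P) ∪ (bar '' P)

/-- A linear superstring of `P` contains every string of `P` as an infix. -/
def IsLinearSuperstring {β : Type*} (P : Set (List β)) (w : List β) : Prop := ∀ s ∈ P, s <:+: w

/-- `s` is a circular substring of the circular string `c` if `s` is an infix of `c^n`
for some `n ≥ 1`. -/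
def IsCircularSubstring {β : Type*} (c s : List β) : Prop :=
  ∃ n, 1 ≤ n ∧ s <:+: (List.replicate n c).flatten

/-- A circular superstring of `P` has every string of `P` as a circular substring. -/
def IsCircularSuperstring {β : Type*} (P : Set (List β)) (c : List β) : Prop :=
  ∀ s ∈ P, IsCircularSubstring c s

/-- The `Σ`-restriction of a string over the barred alphabet: keep the unbarred letters. -/
def restrict {α : Type*} (d : List (α ⊕ α)) : List α :=
  d.filterMap (Sum.elim some (fun _ => none))

/-!
Cut the circle `c` at a barred letter: the lifted strings avoid it, so none of them crosses the
cut, and the unbarred letters of `c`, read linearly from there, form a superstring of `P`. Cutting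
at an unbarred letter gives another one made of the barred letters. The two lengths add up to
`c.length`, so the shorter superstring `w` has `2 * w.length ≤ c.length`. Conversely
`lift w₀ ++ bar w₀` is a circular superstring of `f(P)`, so `c₀.length ≤ 2 * w₀.length`, and the
two bounds multiply to the comparison of ratios.
-/

/-- The barred counterpart of `restrict`: keep the barred letters and remove their bars. -/
def restrictBar {α : Type*} (d : List (α ⊕ α)) : List α :=
  d.filterMap (Sum.elim (fun _ => none) some)

theorem length_restrict_add_length_restrictBar {α : Type*} (d : List (α ⊕ α)) :
    (restrict d).length + (restrictBar d).length = d.length := by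
  induction d with
  | nil => rfl
  | cons x d ih =>
    unfold restrict restrictBar at ih ⊢
    cases x <;> simp only [List.filterMap_cons, Sum.elim_inl, Sum.elim_inr, List.length_cons] <;>
      lia

section Infix

variable {β : Type*} {s u v : List β} {b : β}

theorem infix_or_infix_of_infix_append_cons (hb : b ∉ s) (h : s <:+: u ++ b :: v) :
    s <:+: u ∨ s <:+: v := by
  rcases List.infix_append_iff.1 h with hu | hbv | ⟨l, r, rfl, hl, hr⟩
  · exact .inl hu
  · rcases List.infix_cons_iff.1 hbv with hpre | hv
    · rcases List.prefix_cons_iff.1 hpre with rfl | ⟨t, rfl, -⟩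
      · exact .inl List.nil_infix
      · simp at hb
    · exact .inr hv
  · rcases List.prefix_cons_iff.1 hr with rfl | ⟨t, rfl, -⟩
    · exact .inl (by simpa using hl.isInfix)
    · simp at hb

theorem append_flatten_replicate_append (u v : List β) (n : ℕ) :
    v ++ (List.replicate n (u ++ v)).flatten ++ u = (List.replicate (n + 1) (v ++ u)).flatten := by
  induction n with
  | zero => simp
  | succ n ih =>
    rw [List.replicate_succ (n := n + 1), List.flatten_cons, ← ih]
    simp [List.replicate_succ]

end Infix

namespace IsCircularSubstring

variable {β : Type*} {c s u v : List β} {b : β}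

theorem of_infix (h : s <:+: c) : IsCircularSubstring c s :=
  ⟨1, le_rfl, by simpa using h⟩

theorem subset (h : IsCircularSubstring c s) : s ⊆ c := by
  obtain ⟨n, -, h⟩ := h
  intro a ha
  have hmem := h.subset ha
  simp only [List.mem_flatten, List.mem_replicate] at hmem
  obtain ⟨_, ⟨-, rfl⟩, hac⟩ := hmem
  exact hac

theorem append_comm (h : IsCircularSubstring (u ++ v) s) : IsCircularSubstring (v ++ u) s := by
  obtain ⟨n, -, h⟩ := h
  refine ⟨n + 1, by lia, ?_⟩
  rw [← append_flatten_replicate_append]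
  exact h.trans (List.infix_append ..)

theorem infix_of_notMem_last (h : IsCircularSubstring (u ++ [b]) s) (hb : b ∉ s) : s <:+: u := by
  obtain ⟨n, -, h⟩ := h
  induction n with
  | zero =>
    obtain rfl : s = [] := by simpa using h
    exact List.nil_infix
  | succ n ih =>
    have hsplit : s <:+: u ++ b :: (List.replicate n (u ++ [b])).flatten := by
      simpa [List.replicate_succ] using h
    exact (infix_or_infix_of_infix_append_cons hb hsplit).elim id ih

theorem infix_append_of_notMem (h : IsCircularSubstring (u ++ b :: v) s) (hb : b ∉ s) :
    s <:+: v ++ u := by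
  have hrot : IsCircularSubstring (v ++ (u ++ [b])) s := append_comm (by simpa using h)
  exact infix_of_notMem_last (by simpa using hrot) hb

end IsCircularSubstring

namespace IsCircularSuperstring

variable {α β : Type*} {P : Set (List α)}

theorem exists_isLinearSuperstring_length_eq_length_filterMap {i : α → β} {g : β → Option α}
    (hgi : ∀ a, g (i a) = some a) {c : List β} (hc : IsCircularSuperstring (List.map i '' P) c)
    {b : β} (hbc : b ∈ c) (hb : g b = none) :
    ∃ w, IsLinearSuperstring P w ∧ w.length = (c.filterMap g).length := by
  obtain ⟨u, v, rfl⟩ := List.append_of_mem hbc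
  refine ⟨(v ++ u).filterMap g, fun s hs => ?_, by simp [hb, Nat.add_comm]⟩
  have hbs : b ∉ s.map i := by
    intro hmem
    obtain ⟨a, -, rfl⟩ := List.mem_map.1 hmem
    simp [hgi] at hb
  have hinfix : s.map i <:+: v ++ u := (hc _ ⟨s, hs, rfl⟩).infix_append_of_notMem hbs
  have hgs : (s.map i).filterMap g = s := by
    simp [List.filterMap_map, hgi]
  exact hgs ▸ hinfix.filterMap g

theorem exists_isLinearSuperstring_two_mul_length_le {c : List (α ⊕ α)}
    (hc : IsCircularSuperstring (barred P) c) :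
    ∃ w, IsLinearSuperstring P w ∧ 2 * w.length ≤ c.length := by
  have hlift : IsCircularSuperstring (lift '' P) c := fun s hs => hc s (.inl hs)
  have hbar : IsCircularSuperstring (bar '' P) c := fun s hs => hc s (.inr hs)
  by_cases hP : ∀ s ∈ P, s = []
  · exact ⟨[], fun s hs => (hP s hs).symm ▸ List.nil_infix, by simp⟩
  push Not at hP
  obtain ⟨s, hs, hne⟩ := hP
  obtain ⟨a, ha⟩ := List.exists_mem_of_ne_nil s hne
  have hl : Sum.inl a ∈ c := (hlift _ ⟨s, hs, rfl⟩).subset (List.mem_map_of_mem ha)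
  have hr : Sum.inr a ∈ c := (hbar _ ⟨s, hs, rfl⟩).subset (List.mem_map_of_mem ha)
  obtain ⟨w, hw, hwlen⟩ : ∃ w, IsLinearSuperstring P w ∧ w.length = (restrict c).length :=
    exists_isLinearSuperstring_length_eq_length_filterMap (i := Sum.inl)
      (fun _ => rfl) hlift hr rfl
  obtain ⟨w', hw', hwlen'⟩ : ∃ w, IsLinearSuperstring P w ∧ w.length = (restrictBar c).length :=
    exists_isLinearSuperstring_length_eq_length_filterMap (i := Sum.inr)
      (fun _ => rfl) hbar hl rfl
  have hsum := length_restrict_add_length_restrictBar c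
  rcases le_total w.length w'.length with hle | hle
  · exact ⟨w, hw, by lia⟩
  · exact ⟨w', hw', by lia⟩

end IsCircularSuperstring

theorem IsLinearSuperstring.isCircularSuperstring_lift_append_bar {α : Type*} {P : Set (List α)}
    {w : List α} (hw : IsLinearSuperstring P w) :
    IsCircularSuperstring (barred P) (lift w ++ bar w) := by
  rintro _ (⟨s, hs, rfl⟩ | ⟨s, hs, rfl⟩)
  · exact .of_infix (((hw s hs).map Sum.inl).trans List.infix_append_left)
  · exact .of_infix (((hw s hs).map Sum.inr).trans List.infix_append_right)

/-- Strict-reduction inequality for the length measure: from a circular superstring `c` of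
`f(P)` one obtains a linear superstring `w` of `P` whose approximation ratio for SLS on `P`
is at most the approximation ratio of `c` for SCS on `f(P)`. -/
theorem strict_reduction_length_measure {α : Type*} (P : Set (List α))
    (w₀ : List α) (hw₀ : IsLinearSuperstring P w₀)
    (hw₀min : ∀ w : List α, IsLinearSuperstring P w → w₀.length ≤ w.length)
    (c₀ : List (α ⊕ α)) (hc₀ : IsCircularSuperstring (barred P) c₀)
    (hc₀min : ∀ c' : List (α ⊕ α), IsCircularSuperstring (barred P) c' → c₀.length ≤ c'.length)
    (c : List (α ⊕ α)) (hc : IsCircularSuperstring (barred P) c) :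
    ∃ w : List α, IsLinearSuperstring P w ∧ 2 * w.length ≤ c.length ∧
      w.length * c₀.length ≤ c.length * w₀.length := by
  obtain ⟨w, hw, hwc⟩ := hc.exists_isLinearSuperstring_two_mul_length_le
  have hc₀w₀ : c₀.length ≤ 2 * w₀.length := by
    simpa [lift, bar, two_mul] using hc₀min _ hw₀.isCircularSuperstring_lift_append_bar
  refine ⟨w, hw, hwc, ?_⟩
  calc w.length * c₀.length ≤ w.length * (2 * w₀.length) := Nat.mul_le_mul_left _ hc₀w₀
    _ = 2 * w.length * w₀.length := by ring
    _ ≤ c.length * w₀.length := Nat.mul_le_mul_right _ hwc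
end

section
/- Let P be a finite set of nonempty strings over Σ such that no string of P is an infix of another string of P, and let F be the finite set f(P) = {lift s | s ∈ P} ∪ {bar s | s ∈ P} over Σ ⊕ Σ. If w is a greedy linear superstring of F (GreedySup F w), then the Σ-restriction of w is a greedy linear superstring of P (GreedySup P (Σ-restriction of w)). -/
/-- `ov x y`: the maximum length of a list that is simultaneously a proper suffix of `x`
and a proper prefix of `y`. -/
def ov {α : Type*} [DecidableEq α] (x y : List α) : ℕ :=
  Nat.findGreatest
    (fun k => k < x.length ∧ k < y.length ∧ x.drop (x.length - k) = y.take k)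
    (min x.length y.length)

/-- `merge x y = x ⊙ y`, the merge of `x` onto `y` along their longest overlap. -/
def merge {α : Type*} [DecidableEq α] (x y : List α) : List α := x ++ y.drop (ov x y)

/-- `GreedySup Q z`: `z` is a possible output of the greedy superstring algorithm on the
finite set `Q` of strings. -/
inductive GreedySup {α : Type*} [DecidableEq α] : Finset (List α) → List α → Prop
  | single (w : List α) : GreedySup {w} w
  | step {Q : Finset (List α)} {z : List α} (u v : List α) (hu : u ∈ Q) (hv : v ∈ Q)
      (hne : u ≠ v) (hmax : ∀ x ∈ Q, ∀ y ∈ Q, x ≠ y → ov x y ≤ ov u v)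
      (hrec : GreedySup ((Q \ {u, v}) ∪ {merge u v}) z) : GreedySup Q z

/-!
While some overlap is positive, the greedy algorithm on an infix code over `α ⊕ α` whose strings
are all barred or all unbarred merges two strings of the same kind. Merging unbarred strings is a
greedy step on the unbarred part, because the overlap stays maximal there, and merging barred
strings leaves that part unchanged. Once all overlaps vanish, merging is concatenation and creates
no new overlap, since maximality of each merged overlap keeps the set an infix code. So the outputs
are exactly the concatenations of the remaining strings in any order, and restriction turns these
into concatenations of the unbarred ones.
-/

section Overlap

variable {α : Type*} [DecidableEq α] {s t u v x y : List α}

theorem length_le_ov (hx : s <:+ x) (hy : s <+: y) (hsx : s ≠ x) (hsy : s ≠ y) :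
    s.length ≤ ov x y := by
  have hlx : s.length < x.length := hx.length_le.lt_of_ne fun h => hsx (hx.eq_of_length h)
  have hly : s.length < y.length := hy.length_le.lt_of_ne fun h => hsy (hy.eq_of_length h)
  refine Nat.le_findGreatest (le_min hlx.le hly.le) ⟨hlx, hly, ?_⟩
  rw [← List.suffix_iff_eq_drop.1 hx, ← List.prefix_iff_eq_take.1 hy]

theorem ov_spec (h : ov x y ≠ 0) :
    ov x y < x.length ∧ ov x y < y.length ∧ x.drop (x.length - ov x y) = y.take (ov x y) :=
  Nat.findGreatest_of_ne_zero rfl h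

theorem take_ov_suffix (x y : List α) : y.take (ov x y) <:+ x := by
  by_cases h : ov x y = 0
  · simp only [h, List.take_zero, List.nil_suffix]
  · exact (ov_spec h).2.2 ▸ List.drop_suffix _ _

theorem ov_le_length_right (x y : List α) : ov x y ≤ y.length :=
  (Nat.findGreatest_le _).trans (min_le_right _ _)

theorem ov_append_left_le (h : ¬ v <:+: y) : ov (u ++ v) y ≤ ov v y := by
  by_cases h0 : ov (u ++ v) y = 0
  · exact h0 ▸ Nat.zero_le _
  set s := y.take (ov (u ++ v) y)
  have hlen : s.length = ov (u ++ v) y := List.length_take_of_le (ov_le_length_right _ _)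
  have hsy : s <+: y := List.take_prefix _ _
  have hsv : s <:+ v :=
    (List.suffix_or_suffix_of_suffix (take_ov_suffix _ _) (List.suffix_append u v)).resolve_right
      fun hvs => h (hvs.isInfix.trans hsy.isInfix)
  rw [← hlen]
  refine length_le_ov hsv hsy (fun e => h (e ▸ hsy.isInfix)) fun e => ?_
  exact (ov_spec h0).2.1.ne (hlen.symm.trans (congrArg List.length e))

theorem ov_append_right_le (h : ¬ u <:+: x) : ov x (u ++ v) ≤ ov x u := by
  by_cases h0 : ov x (u ++ v) = 0
  · exact h0 ▸ Nat.zero_le _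
  set s := (u ++ v).take (ov x (u ++ v))
  have hlen : s.length = ov x (u ++ v) := List.length_take_of_le (ov_le_length_right _ _)
  have hsx : s <:+ x := take_ov_suffix _ _
  have hsu : s <+: u :=
    (List.prefix_or_prefix_of_prefix (List.take_prefix _ _) (List.prefix_append u v)).resolve_right
      fun hus => h (hus.isInfix.trans hsx.isInfix)
  rw [← hlen]
  refine length_le_ov hsx hsu (fun e => ?_) fun e => h (e ▸ hsx.isInfix)
  exact (ov_spec h0).1.ne (hlen.symm.trans (congrArg List.length e))

theorem ov_eq_zero_of_disjoint (h : x.Disjoint y) : ov x y = 0 := by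
  by_contra h0
  have hpos : 0 < (y.take (ov x y)).length := by
    rw [List.length_take_of_le (ov_le_length_right x y)]
    exact Nat.pos_of_ne_zero h0
  obtain ⟨c, hc⟩ := List.exists_mem_of_length_pos hpos
  exact h ((take_ov_suffix x y).subset hc) (List.mem_of_mem_take hc)

theorem prefix_merge (u v : List α) : u <+: merge u v := List.prefix_append _ _

theorem merge_eq_append (h : ov u v = 0) : merge u v = u ++ v := by
  simp only [merge, h, List.drop_zero]

-- A new infix straddles the seam and is not contained in `v`, so the suffix of `u` it starts with
-- is longer than the overlap of `u` and `v`.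
theorem ov_lt_ov_of_infix_merge (h : t <:+: merge u v) (htu : ¬ t <:+: u) (htv : ¬ t <:+: v)
    (hut : ¬ u <:+: t) : ov u v < ov u t := by
  obtain h | h | ⟨d, c, rfl, hd, hc⟩ := List.infix_append_iff.1 h
  · exact absurd h htu
  · exact absurd (h.trans (List.drop_suffix _ _).isInfix) htv
  have hlt : ov u v < d.length := by
    by_contra! hle
    have hdv : d <:+ v.take (ov u v) :=
      List.suffix_of_suffix_length_le hd (take_ov_suffix u v)
        (by rwa [List.length_take_of_le (ov_le_length_right u v)])
    refine htv ?_
    rw [← List.take_append_drop (ov u v) v]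
    exact List.infix_append_iff.2 (.inr (.inr ⟨d, c, rfl, hdv, hc⟩))
  have hdt : d <+: d ++ c := List.prefix_append d c
  exact hlt.trans_le <| length_le_ov hd hdt (fun e => hut (e ▸ hdt.isInfix))
    fun e => htu (e ▸ hd.isInfix)

variable {β : Type*} [DecidableEq β] {f : α → β}

theorem ov_map (hf : f.Injective) (x y : List α) : ov (x.map f) (y.map f) = ov x y := by
  simp only [ov, List.length_map, ← List.map_drop, ← List.map_take,
    (List.map_injective_iff.2 hf).eq_iff]

theorem merge_map (hf : f.Injective) (x y : List α) :
    merge (x.map f) (y.map f) = (merge x y).map f := by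
  simp only [merge, ov_map hf, List.map_append, List.map_drop]

end Overlap

theorem infix_of_map_infix_map {α β : Type*} {f : α → β} (hf : f.Injective) {x y : List α}
    (h : x.map f <:+: y.map f) : x <:+: y := by
  obtain ⟨z, hz, hxz⟩ := List.infix_map_iff.1 h
  exact List.map_injective_iff.2 hf hxz ▸ hz

theorem not_infix_of_disjoint {α : Type*} {x y : List α} (hx : x ≠ []) (h : x.Disjoint y) :
    ¬ x <:+: y := fun hxy =>
  have ⟨_, hc⟩ := List.exists_mem_of_ne_nil x hx
  h hc (hxy.subset hc)

/-- An infix code: a finite set of nonempty strings, none of which is an infix of another. -/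
structure IsInfixCode {α : Type*} (Q : Finset (List α)) : Prop where
  ne_nil : ∀ s ∈ Q, s ≠ []
  isAntichain : IsAntichain (· <:+: ·) (Q : Set (List α))

/-- Distinct strings of `Q` do not overlap; `ov` counts proper overlaps only. -/
def IsOverlapFree {α : Type*} [DecidableEq α] (Q : Finset (List α)) : Prop :=
  (Q : Set (List α)).Pairwise fun x y => ov x y = 0

/-- The set of strings left after a round of the greedy algorithm that merges `u` and `v`. -/
def contract {α : Type*} [DecidableEq α] (Q : Finset (List α)) (u v : List α) :
    Finset (List α) :=
  (Q \ {u, v}) ∪ {merge u v}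

section Contract

variable {α : Type*} [DecidableEq α] {Q : Finset (List α)} {u v x : List α}

theorem mem_contract : x ∈ contract Q u v ↔ x = merge u v ∨ x ∈ Q ∧ x ≠ u ∧ x ≠ v := by
  simp only [contract, Finset.mem_union, Finset.mem_sdiff, Finset.mem_insert,
    Finset.mem_singleton, not_or]
  exact or_comm

theorem merge_notMem_sdiff (hQ : IsAntichain (· <:+: ·) (Q : Set (List α))) (hu : u ∈ Q) :
    merge u v ∉ Q \ {u, v} := by
  simp only [Finset.mem_sdiff, Finset.mem_insert, Finset.mem_singleton, not_or]
  rintro ⟨hmem, hne, -⟩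
  exact hne (hQ.eq hu hmem (prefix_merge u v).isInfix).symm

theorem val_contract (hQ : IsAntichain (· <:+: ·) (Q : Set (List α))) (hu : u ∈ Q) (huv : u ≠ v) :
    (contract Q u v).val = merge u v ::ₘ (Q.val.erase u).erase v := by
  rw [contract, Finset.union_comm, ← Finset.insert_eq,
    Finset.insert_val_of_notMem (merge_notMem_sdiff hQ hu), Finset.sdiff_val,
    Finset.insert_val_of_notMem (Finset.notMem_singleton.2 huv), Finset.singleton_val,
    Multiset.sub_cons, Multiset.sub_singleton]

theorem isAntichain_contract (hQ : IsAntichain (· <:+: ·) (Q : Set (List α))) (hu : u ∈ Q)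
    (hv : v ∈ Q) (hmax : ∀ x ∈ Q, u ≠ x → ov u x ≤ ov u v) :
    IsAntichain (· <:+: ·) (contract Q u v : Set (List α)) := by
  intro s hs t ht hst hin
  rcases mem_contract.1 hs with rfl | ⟨hsQ, hsu, hsv⟩ <;>
    rcases mem_contract.1 ht with rfl | ⟨htQ, htu, -⟩
  · exact hst rfl
  · exact hQ hu htQ htu.symm ((prefix_merge u v).isInfix.trans hin)
  · exact (hmax s hsQ hsu.symm).not_gt
      (ov_lt_ov_of_infix_merge hin (hQ hsQ hu hsu) (hQ hsQ hv hsv) (hQ hu hsQ hsu.symm))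
  · exact hQ hsQ htQ hst hin

theorem IsInfixCode.contract (hQ : IsInfixCode Q) (hu : u ∈ Q) (hv : v ∈ Q)
    (hmax : ∀ x ∈ Q, u ≠ x → ov u x ≤ ov u v) : IsInfixCode (contract Q u v) where
  ne_nil s hs := by
    rcases mem_contract.1 hs with rfl | ⟨hsQ, -⟩
    · exact List.append_ne_nil_of_left_ne_nil (hQ.ne_nil u hu) _
    · exact hQ.ne_nil s hsQ
  isAntichain := isAntichain_contract hQ.isAntichain hu hv hmax

theorem IsOverlapFree.contract (hov : IsOverlapFree Q)
    (hQ : IsAntichain (· <:+: ·) (Q : Set (List α))) (hu : u ∈ Q) (hv : v ∈ Q) (huv : u ≠ v) :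
    IsOverlapFree (contract Q u v) := by
  have hm : merge u v = u ++ v := merge_eq_append (hov hu hv huv)
  intro x hx y hy hxy
  rcases mem_contract.1 hx with rfl | ⟨hxQ, hxu, -⟩ <;>
    rcases mem_contract.1 hy with rfl | ⟨hyQ, -, hyv⟩
  · exact absurd rfl hxy
  · rw [hm, ← Nat.le_zero, ← hov hv hyQ hyv.symm]
    exact ov_append_left_le (hQ hv hyQ hyv.symm)
  · rw [hm, ← Nat.le_zero, ← hov hxQ hu hxu]
    exact ov_append_right_le (hQ hu hxQ hxu.symm)
  · exact hov hxQ hyQ hxy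

theorem contract_image_map_union {β : Type*} [DecidableEq β] {f : α → β} (hf : f.Injective)
    {R : Finset (List β)} (hu : u.map f ∉ R) (hv : v.map f ∉ R) :
    contract (Q.image (List.map f) ∪ R) (u.map f) (v.map f) =
      (contract Q u v).image (List.map f) ∪ R := by
  have hR : R \ {u.map f, v.map f} = R :=
    Finset.sdiff_eq_self_of_disjoint (by simp [hu, hv])
  rw [contract, contract, merge_map hf, Finset.union_sdiff_distrib, hR, Finset.image_union,
    Finset.image_sdiff _ _ (List.map_injective_iff.2 hf), Finset.image_insert,
    Finset.image_singleton, Finset.image_singleton, Finset.union_right_comm]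

theorem ov_le_of_image_map_subset {β : Type*} [DecidableEq β] {f : α → β} (hf : f.Injective)
    {R : Finset (List β)} (hQR : Q.image (List.map f) ⊆ R)
    (hmax : ∀ x ∈ R, ∀ y ∈ R, x ≠ y → ov x y ≤ ov (u.map f) (v.map f)) :
    ∀ x ∈ Q, ∀ y ∈ Q, x ≠ y → ov x y ≤ ov u v := by
  intro x hx y hy hxy
  simpa only [ov_map hf] using hmax _ (hQR (Finset.mem_image_of_mem _ hx)) _
    (hQR (Finset.mem_image_of_mem _ hy)) ((List.map_injective_iff.2 hf).ne hxy)

theorem IsOverlapFree.of_image_map_subset {β : Type*} [DecidableEq β] {f : α → β}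
    (hf : f.Injective) {R : Finset (List β)} (hR : IsOverlapFree R)
    (hQR : Q.image (List.map f) ⊆ R) : IsOverlapFree Q := by
  intro x hx y hy hxy
  simpa only [ov_map hf] using hR (hQR (Finset.mem_image_of_mem _ hx))
    (hQR (Finset.mem_image_of_mem _ hy)) ((List.map_injective_iff.2 hf).ne hxy)

end Contract

section OverlapFree

variable {α : Type*} [DecidableEq α] {Q : Finset (List α)} {z : List α}

theorem GreedySup.nonempty (h : GreedySup Q z) : Q.Nonempty := by
  cases h with
  | single => exact Finset.singleton_nonempty z
  | step u v hu => exact ⟨u, hu⟩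

theorem GreedySup.exists_flatten_eq (h : GreedySup Q z)
    (hQ : IsAntichain (· <:+: ·) (Q : Set (List α))) (hov : IsOverlapFree Q) :
    ∃ l : List (List α), (l : Multiset (List α)) = Q.val ∧ l.flatten = z := by
  induction h with
  | single w => exact ⟨[w], rfl, List.flatten_singleton⟩
  | @step Q z u v hu hv huv hmax _ ih =>
    obtain ⟨l, hl, rfl⟩ :=
      ih (isAntichain_contract hQ hu hv (hmax u hu)) (hov.contract hQ hu hv huv)
    replace hl := hl.trans (val_contract hQ hu huv)
    have hmem : merge u v ∈ l := Multiset.mem_coe.1 (hl ▸ Multiset.mem_cons_self _ _)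
    obtain ⟨a, b, rfl⟩ := List.append_of_mem hmem
    have hab : ((a ++ b : List (List α)) : Multiset (List α)) = (Q.val.erase u).erase v := by
      rw [← Multiset.cons_inj_right (merge u v), ← hl, Multiset.cons_coe, Multiset.coe_eq_coe]
      exact List.perm_middle.symm
    refine ⟨a ++ u :: v :: b, ?_, ?_⟩
    · calc ((a ++ u :: v :: b : List (List α)) : Multiset (List α))
        _ = u ::ₘ v ::ₘ (a ++ b : List (List α)) :=
          Multiset.coe_eq_coe.2 (List.perm_middle.trans (List.perm_middle.cons u))
        _ = Q.val := by
          rw [hab, Multiset.cons_erase ((Multiset.mem_erase_of_ne huv.symm).2 hv),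
            Multiset.cons_erase hu]
    · simp only [merge_eq_append (hov hu hv huv), List.flatten_append, List.flatten_cons,
        List.append_assoc]

theorem GreedySup.of_flatten {Q : Finset (List α)}
    (hQ : IsAntichain (· <:+: ·) (Q : Set (List α))) (hov : IsOverlapFree Q) (hne : Q.Nonempty)
    (l : List (List α)) (hl : (l : Multiset (List α)) = Q.val) : GreedySup Q l.flatten := by
  match l with
  | [] => exact absurd (Finset.val_eq_zero.1 hl.symm) hne.ne_empty
  | [a] =>
    obtain rfl : Q = {a} := Finset.val_injective hl.symm
    simpa only [List.flatten_singleton] using GreedySup.single a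
  | a :: b :: r =>
    have hnodup : (a :: b :: r).Nodup := Multiset.coe_nodup.1 (hl ▸ Q.nodup)
    have hab : a ≠ b := fun h => (List.nodup_cons.1 hnodup).1 (h ▸ List.mem_cons_self)
    have ha : a ∈ Q := by simp [← Finset.mem_val, ← hl]
    have hb : b ∈ Q := by simp [← Finset.mem_val, ← hl]
    have hmax : ∀ x ∈ Q, ∀ y ∈ Q, x ≠ y → ov x y ≤ ov a b := fun x hx y hy hxy =>
      (hov hx hy hxy).trans_le (Nat.zero_le _)
    have hcontract : (((a ++ b) :: r : List (List α)) : Multiset (List α)) =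
        (contract Q a b).val := by
      rw [val_contract hQ ha hab, ← hl, merge_eq_append (hov ha hb hab), ← Multiset.cons_coe,
        ← Multiset.cons_coe, ← Multiset.cons_coe, Multiset.erase_cons_head,
        Multiset.erase_cons_head]
    have hflatten : (a :: b :: r).flatten = ((a ++ b) :: r).flatten := by
      simp only [List.flatten_cons, List.append_assoc]
    rw [hflatten]
    exact .step a b ha hb hab hmax <|
      GreedySup.of_flatten (isAntichain_contract hQ ha hb (hmax a ha)) (hov.contract hQ ha hb hab)
        ⟨_, mem_contract.2 (.inl rfl)⟩ ((a ++ b) :: r) hcontract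
termination_by l.length

end OverlapFree

section Barred

variable {α : Type*}

theorem lift_injective : (lift : List α → List (α ⊕ α)).Injective :=
  List.map_injective_iff.2 Sum.inl_injective

theorem bar_injective : (bar : List α → List (α ⊕ α)).Injective :=
  List.map_injective_iff.2 Sum.inr_injective

theorem lift_disjoint_bar (x y : List α) : (lift x).Disjoint (bar y) := by
  simp [List.disjoint_left, lift, bar]

theorem restrict_lift (x : List α) : restrict (lift x) = x := by
  simp [restrict, lift, Function.comp_def]

theorem restrict_bar (x : List α) : restrict (bar x) = [] := by
  simp [restrict, bar]

theorem restrict_flatten (l : List (List (α ⊕ α))) :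
    restrict l.flatten = ((l.map restrict).filter (· ≠ [])).flatten := by
  rw [List.flatten_filter_ne_nil, restrict, List.filterMap_flatten]
  rfl

variable [DecidableEq α] {A B : Finset (List α)}

theorem disjoint_image_lift_image_bar (hA : ∀ s ∈ A, s ≠ []) :
    Disjoint (A.image lift) (B.image bar) := by
  rw [Finset.disjoint_left, Finset.forall_mem_image]
  intro a ha hmem
  obtain ⟨b, -, hab⟩ := Finset.mem_image.1 hmem
  exact not_infix_of_disjoint (mt List.map_eq_nil_iff.1 (hA a ha)) (lift_disjoint_bar a b)
    (hab ▸ List.infix_rfl)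

theorem isAntichain_image_lift_union_image_bar (hA : IsInfixCode A) (hB : IsInfixCode B) :
    IsAntichain (· <:+: ·) ((A.image lift ∪ B.image bar : Finset _) : Set (List (α ⊕ α))) := by
  rw [Finset.coe_union, Finset.coe_image, Finset.coe_image, isAntichain_union]
  refine ⟨hA.isAntichain.image _ fun _ _ => infix_of_map_infix_map Sum.inl_injective,
    hB.isAntichain.image _ fun _ _ => infix_of_map_infix_map Sum.inr_injective, ?_⟩
  rintro _ ⟨a, ha, rfl⟩ _ ⟨b, hb, rfl⟩ -
  have hdisj := lift_disjoint_bar a b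
  exact ⟨not_infix_of_disjoint (mt List.map_eq_nil_iff.1 (hA.ne_nil a ha)) hdisj,
    not_infix_of_disjoint (mt List.map_eq_nil_iff.1 (hB.ne_nil b hb)) hdisj.symm⟩

theorem filter_map_restrict_image_lift_union_image_bar (hA : ∀ s ∈ A, s ≠ []) :
    ((A.image lift ∪ B.image bar).val.map restrict).filter (· ≠ []) = A.val := by
  rw [← Finset.disjUnion_eq_union _ _ (disjoint_image_lift_image_bar hA), Finset.disjUnion_val,
    Finset.image_val_of_injOn lift_injective.injOn, Finset.image_val_of_injOn bar_injective.injOn,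
    Multiset.map_add, Multiset.map_map, Multiset.map_map, Multiset.filter_add]
  simp only [Function.comp_def, restrict_lift, restrict_bar, Multiset.map_id']
  rw [Multiset.filter_eq_self.2 hA, Multiset.map_const', Multiset.filter_eq_nil.2, add_zero]
  exact fun s hs => not_not.2 (Multiset.eq_of_mem_replicate hs)

theorem restrict_greedySup_of_isOverlapFree (hA : IsInfixCode A) (hB : IsInfixCode B)
    (hne : A.Nonempty) (hov : IsOverlapFree (A.image lift ∪ B.image bar)) {w : List (α ⊕ α)}
    (hw : GreedySup (A.image lift ∪ B.image bar) w) : GreedySup A (restrict w) := by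
  obtain ⟨l, hl, rfl⟩ :=
    hw.exists_flatten_eq (isAntichain_image_lift_union_image_bar hA hB) hov
  have hlA : ((l.map restrict).filter (· ≠ []) : Multiset (List α)) = A.val := by
    rw [← filter_map_restrict_image_lift_union_image_bar (B := B) hA.ne_nil, ← hl, Multiset.map_coe,
      Multiset.filter_coe]
  rw [restrict_flatten]
  exact .of_flatten hA.isAntichain
    (hov.of_image_map_subset Sum.inl_injective Finset.subset_union_left) hne _ hlA

end Barred

theorem restrict_greedySup_general {α : Type*} [DecidableEq α] {A B : Finset (List α)}
    (hA : IsInfixCode A) (hB : IsInfixCode B) (hne : A.Nonempty) {w : List (α ⊕ α)}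
    (hw : GreedySup (A.image lift ∪ B.image bar) w) : GreedySup A (restrict w) := by
  generalize hQ : A.image lift ∪ B.image bar = Q at hw
  induction hw generalizing A B with
  | single w =>
    have hov : IsOverlapFree {w} := by
      simpa only [IsOverlapFree, Finset.coe_singleton] using Set.pairwise_singleton w _
    exact restrict_greedySup_of_isOverlapFree hA hB hne (hQ ▸ hov) (hQ ▸ .single w)
  | @step Q w u v hu hv huv hmax hrec ih =>
    subst hQ
    by_cases h0 : ov u v = 0
    · exact restrict_greedySup_of_isOverlapFree hA hB hne
        (fun x hx y hy hxy => Nat.le_zero.1 (h0 ▸ hmax x hx y hy hxy))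
        (.step u v hu hv huv hmax hrec)
    have hdisj : Disjoint (A.image lift) (B.image bar) :=
      disjoint_image_lift_image_bar hA.ne_nil
    obtain hu | hu := Finset.mem_union.1 hu <;> obtain hv | hv := Finset.mem_union.1 hv <;>
      obtain ⟨a, ha, rfl⟩ := Finset.mem_image.1 hu <;>
      obtain ⟨b, hb, rfl⟩ := Finset.mem_image.1 hv
    · have hmaxA := ov_le_of_image_map_subset Sum.inl_injective Finset.subset_union_left hmax
      refine .step a b ha hb (ne_of_apply_ne lift huv) hmaxA
        (ih (hA.contract ha hb (hmaxA a ha)) hB ⟨_, mem_contract.2 (.inl rfl)⟩ ?_)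
      exact (contract_image_map_union Sum.inl_injective (Finset.disjoint_left.1 hdisj hu)
        (Finset.disjoint_left.1 hdisj hv)).symm
    · exact absurd (ov_eq_zero_of_disjoint (lift_disjoint_bar a b)) h0
    · exact absurd (ov_eq_zero_of_disjoint (lift_disjoint_bar b a).symm) h0
    · have hmaxB := ov_le_of_image_map_subset Sum.inr_injective Finset.subset_union_right hmax
      refine ih hA (hB.contract ha hb (hmaxB a ha)) hne ?_
      rw [Finset.union_comm (A.image lift), Finset.union_comm (A.image lift)]
      exact (contract_image_map_union Sum.inr_injective (Finset.disjoint_right.1 hdisj hu)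
        (Finset.disjoint_right.1 hdisj hv)).symm

/-- If `w` is a greedy linear superstring of `f(P)`, then the `Σ`-restriction of `w` is a
greedy linear superstring of `P`. -/
theorem restrict_greedySup {α : Type*} [DecidableEq α] (P : Finset (List α))
    (hne : ∀ s ∈ P, s ≠ ([] : List α))
    (hinf : ∀ s ∈ P, ∀ t ∈ P, s ≠ t → ¬ s <:+: t)
    (w : List (α ⊕ α)) (hw : GreedySup (P.image lift ∪ P.image bar) w) :
    GreedySup P (restrict w) := by
  have hP : IsInfixCode P := ⟨hne, fun s hs t ht hst => hinf s hs t ht hst⟩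
  have hPne : P.Nonempty := by
    simpa only [Finset.union_nonempty, Finset.image_nonempty, or_self] using hw.nonempty
  exact restrict_greedySup_general hP hP hPne hw
end
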